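/- arXiv:1705.07305 — 5 statements merged into one kernel-verified Lean document; each statement's English description precedes it below -/
import Mathlib

section
/- Let c, d, e, f > 0 be real numbers, and let ε, ϑ > 0 and 𝒳, 𝒴 be real numbers with 𝒳 − ϑ > 0 and 𝒴 − ε > 0. Define the sets U = {(x,y) : 𝒳 − ϑ ≤ x ≤ 𝒳 and y > 0}, V = {(x,y) : x > 0 and 𝒴 − ε ≤ y ≤ 𝒴}, and R = U ∪ V. Then there exist a > 0 and b > 0 such that h(x,y) > 0 for every (x,y) ∈ R. -/
/-! On either strip one variable stays in a compact set avoiding `0`, and `h` is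
`a * x ^ 2 + b * y ^ 2` minus a polynomial of degree at most two in the other variable, with
coefficients continuous in the bounded one. Such a polynomial in `y` is at most a constant times
`1 + y ^ 2`, and `1 + y ^ 2` is at most a constant times `x ^ 2 + y ^ 2` because `x ^ 2` is bounded
away from `0`. So every sufficiently large multiple of `x ^ 2 + y ^ 2` dominates the negative terms
on both strips at once. -/

open Filter Set

theorem quadratic_le_sum_abs_mul_one_add_sq (u v w y : ℝ) :
    u * y ^ 2 + v * y + w ≤ (|u| + |v| + |w|) * (1 + y ^ 2) := by
  have hy : |y| ≤ 1 + y ^ 2 := abs_le.2 ⟨by nlinarith, by nlinarith⟩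
  calc u * y ^ 2 + v * y + w
      ≤ |u| * y ^ 2 + |v * y| + |w| := by gcongr <;> exact le_abs_self _
    _ = |u| * y ^ 2 + |v| * |y| + |w| := by rw [abs_mul]
    _ ≤ |u| * (1 + y ^ 2) + |v| * (1 + y ^ 2) + |w| * (1 + y ^ 2) := by
        gcongr
        · linarith
        · exact le_mul_of_one_le_right (abs_nonneg w) (by linarith [sq_nonneg y])
    _ = (|u| + |v| + |w|) * (1 + y ^ 2) := by ring

theorem one_add_sq_le_one_add_inv_mul_add_sq {r : ℝ} (hr : 0 < r) (y : ℝ) :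
    1 + y ^ 2 ≤ (1 + r⁻¹) * (r + y ^ 2) := by
  have hexpand : (1 + r⁻¹) * (r + y ^ 2) = 1 + y ^ 2 + (r + r⁻¹ * y ^ 2) := by
    field_simp
    ring
  rw [hexpand]
  exact le_add_of_nonneg_right (by positivity)

theorem eventually_forall_mem_quadratic_lt {X : Type*} [TopologicalSpace X] {K : Set X}
    {g u v w : X → ℝ} (hK : IsCompact K) (hg : ContinuousOn g K) (hg_pos : ∀ x ∈ K, 0 < g x)
    (hu : ContinuousOn u K) (hv : ContinuousOn v K) (hw : ContinuousOn w K) :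
    ∀ᶠ N : ℝ in atTop, ∀ x ∈ K, ∀ y : ℝ,
      u x * y ^ 2 + v x * y + w x < N * (g x + y ^ 2) := by
  have hcont : ContinuousOn (fun x => (|u x| + |v x| + |w x|) * (1 + (g x)⁻¹)) K :=
    ((hu.abs.add hv.abs).add hw.abs).mul
      (continuousOn_const.add (hg.inv₀ fun x hx => (hg_pos x hx).ne'))
  obtain ⟨C, hC⟩ := hK.bddAbove_image hcont
  filter_upwards [eventually_gt_atTop C] with N hN x hx y
  have hgx := hg_pos x hx
  calc u x * y ^ 2 + v x * y + w x
      ≤ (|u x| + |v x| + |w x|) * (1 + y ^ 2) :=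
        quadratic_le_sum_abs_mul_one_add_sq _ _ _ _
    _ ≤ (|u x| + |v x| + |w x|) * ((1 + (g x)⁻¹) * (g x + y ^ 2)) := by
        gcongr
        exact one_add_sq_le_one_add_inv_mul_add_sq hgx y
    _ = (|u x| + |v x| + |w x|) * (1 + (g x)⁻¹) * (g x + y ^ 2) := (mul_assoc _ _ _).symm
    _ < N * (g x + y ^ 2) := by
        gcongr
        exact (hC (mem_image_of_mem _ hx)).trans_lt hN

theorem stmt_3_general (c d e f : ℝ) {K L : Set ℝ} (hK : IsCompact K) (hK₀ : 0 ∉ K)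
    (hL : IsCompact L) (hL₀ : 0 ∉ L) :
    ∃ N > (0 : ℝ), ∀ a ≥ N, ∀ b ≥ N, ∀ x y : ℝ, x ∈ K ∨ y ∈ L →
      0 < a * x ^ 2 + b * y ^ 2 - c * x * y ^ 2 - d * x * y - e * x - f * y := by
  have sq_pos_of_mem {S : Set ℝ} (hS₀ : 0 ∉ S) (x : ℝ) (hx : x ∈ S) : 0 < x ^ 2 :=
    sq_pos_of_ne_zero (ne_of_mem_of_not_mem hx hS₀)
  have hK_lt : ∀ᶠ N : ℝ in atTop, ∀ x ∈ K, ∀ y : ℝ,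
      c * x * y ^ 2 + (d * x + f) * y + e * x < N * (x ^ 2 + y ^ 2) :=
    eventually_forall_mem_quadratic_lt hK (by fun_prop) (sq_pos_of_mem hK₀)
      (by fun_prop) (by fun_prop) (by fun_prop)
  have hL_lt : ∀ᶠ N : ℝ in atTop, ∀ y ∈ L, ∀ x : ℝ,
      0 * x ^ 2 + (c * y ^ 2 + d * y + e) * x + f * y < N * (y ^ 2 + x ^ 2) :=
    eventually_forall_mem_quadratic_lt hL (by fun_prop) (sq_pos_of_mem hL₀)
      (by fun_prop) (by fun_prop) (by fun_prop)
  obtain ⟨N, hN, hNK, hNL⟩ := ((eventually_gt_atTop 0).and (hK_lt.and hL_lt)).exists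
  refine ⟨N, hN, fun a ha b hb x y hxy => ?_⟩
  have hab : N * (x ^ 2 + y ^ 2) ≤ a * x ^ 2 + b * y ^ 2 := by
    rw [mul_add]
    gcongr
  rcases hxy with hx | hy
  · linarith [hNK x hx y]
  · linarith [hNL y hy x]

/-- For real parameters `a b c d e f`,
`h (x, y) = a*x² + b*y² − c*x*y² − d*x*y − e*x − f*y`.
If `c, d, e, f > 0`, `ε, ϑ > 0`, `𝒳 − ϑ > 0` and `𝒴 − ε > 0`, then there exist
`a > 0` and `b > 0` such that `h (x, y) > 0` on the region
`R = U ∪ V` where `U = {(x,y) : 𝒳 − ϑ ≤ x ≤ 𝒳, y > 0}` and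
`V = {(x,y) : x > 0, 𝒴 − ε ≤ y ≤ 𝒴}`. -/
theorem stmt_3 (c d e f ε ϑ 𝒳 𝒴 : ℝ) (hc : 0 < c) (hd : 0 < d) (he : 0 < e) (hf : 0 < f)
    (hε : 0 < ε) (hϑ : 0 < ϑ) (hXϑ : 0 < 𝒳 - ϑ) (hYε : 0 < 𝒴 - ε) :
    ∃ a > (0 : ℝ), ∃ b > (0 : ℝ), ∀ x y : ℝ,
      ((𝒳 - ϑ ≤ x ∧ x ≤ 𝒳 ∧ 0 < y) ∨ (0 < x ∧ 𝒴 - ε ≤ y ∧ y ≤ 𝒴)) →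
      0 < a * x ^ 2 + b * y ^ 2 - c * x * y ^ 2 - d * x * y - e * x - f * y := by
  obtain ⟨N, hN, hpos⟩ :=
    stmt_3_general c d e f (K := Icc (𝒳 - ϑ) 𝒳) (L := Icc (𝒴 - ε) 𝒴) isCompact_Icc
      (fun h => hXϑ.not_ge h.1) isCompact_Icc (fun h => hYε.not_ge h.1)
  exact ⟨N, hN, N, hN, fun x y hxy =>
    hpos N le_rfl N le_rfl x y (hxy.imp (fun h => ⟨h.1, h.2.1⟩) And.right)⟩
end

section
/- Let f, r, v : [0, ∞) → ℝⁿ be functions such that f is differentiable, r is continuous, v is differentiable, and v′(t) = f(t) + r(t) for all t ≥ 0. If v(t) → 0, r(t) → 0 and f′(t) → 0 as t → ∞, then f(t) → 0 as t → ∞. -/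
/-!
Barbalat's argument: `v (t + δ) - v t` tends to `0`, while it differs from `δ • v' t` by at most
`ε δ` as soon as `v'` oscillates by at most `ε` on intervals of length `δ`. So `v' → 0` whenever `v`
converges and `v'` is uniformly continuous near infinity. Here `v' = f + r` is so because `f` has
bounded derivative and `r` converges.
-/

open Filter Set Asymptotics
open scoped Topology

/-- Uniform continuity near `+∞`, the regularity of the derivative needed in Barbalat's lemma.
Points are compared with the left endpoint of an interval only, which costs at most a factor `2`
in `ε`, and nothing is required of `g` on sets that are bounded above. -/
def UniformContinuousAtTop {X : Type*} [PseudoMetricSpace X] (g : ℝ → X) : Prop :=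
  ∀ ε > 0, ∃ δ > 0, ∀ᶠ t in atTop, ∀ s ∈ Icc t (t + δ), dist (g s) (g t) ≤ ε

namespace UniformContinuousAtTop

theorem of_tendsto {X : Type*} [PseudoMetricSpace X] {g : ℝ → X} {l : X}
    (hg : Tendsto g atTop (𝓝 l)) : UniformContinuousAtTop g := by
  intro ε hε
  refine ⟨1, one_pos, ?_⟩
  have hclose : ∀ᶠ t in atTop, dist (g t) l ≤ ε / 2 :=
    hg.eventually (Metric.closedBall_mem_nhds l (half_pos hε))
  filter_upwards [eventually_forall_ge_atTop.2 hclose] with t ht s hs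
  calc dist (g s) (g t) ≤ dist (g s) l + dist (g t) l := dist_triangle_right _ _ _
    _ ≤ ε / 2 + ε / 2 := add_le_add (ht s hs.1) (ht t le_rfl)
    _ = ε := add_halves ε

theorem add {E : Type*} [SeminormedAddCommGroup E] {g h : ℝ → E}
    (hg : UniformContinuousAtTop g) (hh : UniformContinuousAtTop h) :
    UniformContinuousAtTop (fun t ↦ g t + h t) := by
  intro ε hε
  obtain ⟨δ₁, hδ₁, hg⟩ := hg (ε / 2) (half_pos hε)
  obtain ⟨δ₂, hδ₂, hh⟩ := hh (ε / 2) (half_pos hε)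
  refine ⟨min δ₁ δ₂, lt_min hδ₁ hδ₂, ?_⟩
  filter_upwards [hg, hh] with t hgt hht s hs
  have hs₁ : s ∈ Icc t (t + δ₁) := Icc_subset_Icc_right (by gcongr; exact min_le_left _ _) hs
  have hs₂ : s ∈ Icc t (t + δ₂) := Icc_subset_Icc_right (by gcongr; exact min_le_right _ _) hs
  calc dist (g s + h s) (g t + h t) ≤ dist (g s) (g t) + dist (h s) (h t) := dist_add_add_le _ _ _ _
    _ ≤ ε / 2 + ε / 2 := add_le_add (hgt s hs₁) (hht s hs₂)
    _ = ε := add_halves ε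

end UniformContinuousAtTop

section Calculus

variable {E : Type*} [NormedAddCommGroup E] [NormedSpace ℝ E] {g g' : ℝ → E}

theorem eventually_hasDerivAt_atTop_of_hasDerivWithinAt_Ici {a : ℝ}
    (hg : ∀ t ∈ Ici a, HasDerivWithinAt g (g' t) (Ici a) t) :
    ∀ᶠ t in atTop, HasDerivAt g (g' t) t :=
  (eventually_gt_atTop a).mono fun t ht ↦ (hg t ht.le).hasDerivAt (Ici_mem_nhds ht)

theorem UniformContinuousAtTop.of_isBigO_one_deriv
    (hg : ∀ᶠ t in atTop, HasDerivAt g (g' t) t) (hg' : g' =O[atTop] (fun _ ↦ 1 : ℝ → ℝ)) :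
    UniformContinuousAtTop g := by
  intro ε hε
  obtain ⟨C, hC, hbound⟩ := hg'.exists_pos
  refine ⟨ε / C, div_pos hε hC, ?_⟩
  filter_upwards [eventually_forall_ge_atTop.2 hg, eventually_forall_ge_atTop.2 hbound.bound]
    with t hderiv hle s hs
  have hlip : ‖g s - g t‖ ≤ C * ‖s - t‖ :=
    (convex_Ici t).norm_image_sub_le_of_norm_hasDerivWithin_le
      (fun x hx ↦ (hderiv x hx).hasDerivWithinAt) (fun x hx ↦ by simpa using hle x hx)
      self_mem_Ici hs.1
  calc dist (g s) (g t) ≤ C * (s - t) := by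
        rwa [dist_eq_norm, ← Real.norm_of_nonneg (sub_nonneg.2 hs.1)]
    _ ≤ C * (ε / C) := by gcongr; linarith [hs.2]
    _ = ε := mul_div_cancel₀ ε hC.ne'

theorem norm_image_sub_sub_smul_le_of_norm_hasDerivWithin_sub_le {s : Set ℝ} {x y C : ℝ} {c : E}
    (hg : ∀ z ∈ s, HasDerivWithinAt g (g' z) s z) (hg' : ∀ z ∈ s, ‖g' z - c‖ ≤ C)
    (hs : Convex ℝ s) (hx : x ∈ s) (hy : y ∈ s) :
    ‖g y - g x - (y - x) • c‖ ≤ C * ‖y - x‖ := by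
  have hderiv : ∀ z ∈ s, HasDerivWithinAt (fun z ↦ g z - z • c) (g' z - c) s z := fun z hz ↦ by
    simpa only [id, one_smul] using (hg z hz).fun_sub ((hasDerivWithinAt_id z s).smul_const c)
  calc ‖g y - g x - (y - x) • c‖ = ‖(g y - y • c) - (g x - x • c)‖ := by congr 1; module
    _ ≤ C * ‖y - x‖ := hs.norm_image_sub_le_of_norm_hasDerivWithin_le hderiv hg' hx hy

theorem UniformContinuousAtTop.tendsto_deriv_zero {l : E}
    (hg' : UniformContinuousAtTop g') (hg : ∀ᶠ t in atTop, HasDerivAt g (g' t) t)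
    (hlim : Tendsto g atTop (𝓝 l)) : Tendsto g' atTop (𝓝 0) := by
  rw [NormedAddGroup.tendsto_nhds_zero]
  intro ε hε
  obtain ⟨δ, hδ, hosc⟩ := hg' (ε / 2) (half_pos hε)
  have hincr : Tendsto (fun t ↦ g (t + δ) - g t) atTop (𝓝 0) := by
    simpa only [Function.comp_def, id, sub_self] using
      (hlim.comp (tendsto_atTop_add_const_right atTop δ tendsto_id)).sub hlim
  have hsmall : ∀ᶠ t in atTop, ‖g (t + δ) - g t‖ < ε / 2 * δ :=
    NormedAddGroup.tendsto_nhds_zero.1 hincr _ (by positivity)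
  filter_upwards [eventually_forall_ge_atTop.2 hg, hosc, hsmall] with t hderiv hosc_t hsmall_t
  have hle : t ≤ t + δ := le_add_of_nonneg_right hδ.le
  have happrox : ‖g (t + δ) - g t - δ • g' t‖ ≤ ε / 2 * δ := by
    simpa only [add_sub_cancel_left, Real.norm_of_nonneg hδ.le] using
      norm_image_sub_sub_smul_le_of_norm_hasDerivWithin_sub_le
        (fun s hs ↦ (hderiv s hs.1).hasDerivWithinAt)
        (fun s hs ↦ dist_eq_norm (g' s) (g' t) ▸ hosc_t s hs)
        (convex_Icc t (t + δ)) (left_mem_Icc.2 hle) (right_mem_Icc.2 hle)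
  refine lt_of_mul_lt_mul_left ?_ hδ.le
  calc δ * ‖g' t‖ = ‖δ • g' t‖ := (norm_smul_of_nonneg hδ.le _).symm
    _ ≤ ‖g (t + δ) - g t‖ + ‖g (t + δ) - g t - δ • g' t‖ := norm_le_norm_add_norm_sub _ _
    _ < ε / 2 * δ + ε / 2 * δ := add_lt_add_of_lt_of_le hsmall_t happrox
    _ = δ * ε := by ring

theorem stmt_9_general {f f' r v : ℝ → E} {l : E}
    (hf : ∀ᶠ t in atTop, HasDerivAt f (f' t) t)
    (hv : ∀ᶠ t in atTop, HasDerivAt v (f t + r t) t)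
    (hv_lim : Tendsto v atTop (𝓝 l)) (hr_lim : Tendsto r atTop (𝓝 0))
    (hf'_bdd : f' =O[atTop] (fun _ ↦ 1 : ℝ → ℝ)) :
    Tendsto f atTop (𝓝 0) := by
  have hunif : UniformContinuousAtTop (fun t ↦ f t + r t) :=
    (UniformContinuousAtTop.of_isBigO_one_deriv hf hf'_bdd).add (.of_tendsto hr_lim)
  have hsum : Tendsto (fun t ↦ f t + r t) atTop (𝓝 0) := hunif.tendsto_deriv_zero hv hv_lim
  simpa only [add_sub_cancel_right, sub_zero] using hsum.sub hr_lim

end Calculus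

/-- If `v′(t) = f(t) + r(t)` on `[0,∞)` with `f` differentiable, `r` continuous,
and `v(t) → 0`, `r(t) → 0`, `f′(t) → 0` as `t → ∞`, then `f(t) → 0` as `t → ∞`. -/
theorem stmt_9 (n : ℕ) (f f' r v : ℝ → EuclideanSpace ℝ (Fin n))
    (hf : ∀ t ∈ Set.Ici (0 : ℝ), HasDerivWithinAt f (f' t) (Set.Ici 0) t)
    (hr : ContinuousOn r (Set.Ici 0))
    (hv : ∀ t ∈ Set.Ici (0 : ℝ), HasDerivWithinAt v (f t + r t) (Set.Ici 0) t)
    (hv0 : Filter.Tendsto v Filter.atTop (nhds 0))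
    (hr0 : Filter.Tendsto r Filter.atTop (nhds 0))
    (hf'0 : Filter.Tendsto f' Filter.atTop (nhds 0)) :
    Filter.Tendsto f Filter.atTop (nhds 0) :=
  stmt_9_general (eventually_hasDerivAt_atTop_of_hasDerivWithinAt_Ici hf)
    (eventually_hasDerivAt_atTop_of_hasDerivWithinAt_Ici hv) hv0 hr0 (hf'0.isBigO_one ℝ)
end

section
/- Let B > 0, A > 0, κ > 0 be real numbers, let t₀ ≥ 0, and let e : [t₀, ∞) → ℝⁿ satisfy e(t₀) = 0 and ‖e(t) − e(s)‖ ≤ B·|t − s| for all t, s ≥ t₀. Suppose t₁ > t₀ is such that ‖e(t₁)‖ ≥ A·exp(−κ·t₁). Then t₁ − t₀ ≥ ξ*, where ξ* is the unique positive solution of B·ξ = A·exp(−κ·(t₀ + ξ)). -/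
/-! A Lipschitz signal drifts from its value at `t₀` by at most `K * (t - t₀)`, which increases
strictly in `t`, whereas the threshold decreases. The drift bound therefore cannot reach the
threshold before the time `t₀ + ξ` at which the two meet. -/

open Set
open scoped NNReal

theorem le_of_strictMonoOn_of_antitoneOn {α β : Type*} [LinearOrder α] [Preorder β]
    {f g : α → β} {s : Set α} {x y : α} (hf : StrictMonoOn f s) (hg : AntitoneOn g s)
    (hx : x ∈ s) (hy : y ∈ s) (hfg : f x ≤ g x) (hgf : g y ≤ f y) : x ≤ y := by
  by_contra! hyx
  have : f y < f y :=
    calc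
      f y < f x := hf hy hx hyx
      _ ≤ g x := hfg
      _ ≤ g y := hg hy hx hyx.le
      _ ≤ f y := hgf
  exact lt_irrefl _ this

theorem antitone_mul_exp_neg_mul {A κ : ℝ} (hA : 0 ≤ A) (hκ : 0 ≤ κ) :
    Antitone fun t ↦ A * Real.exp (-(κ * t)) := fun s t hst ↦ by
  dsimp only
  gcongr

theorem stmt_13_general {E : Type*} [PseudoMetricSpace E] {K : ℝ≥0} {x : ℝ → E} {θ : ℝ → ℝ}
    {t₀ t₁ ξ : ℝ} (hK : 0 < K) (hx : LipschitzOnWith K x (Ici t₀)) (hθ : AntitoneOn θ (Ici t₀))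
    (ht₁ : t₀ ≤ t₁) (htrig : θ t₁ ≤ dist (x t₁) (x t₀))
    (hξ : 0 ≤ ξ) (hξθ : K * ξ ≤ θ (t₀ + ξ)) : ξ ≤ t₁ - t₀ := by
  have hdrift : dist (x t₁) (x t₀) ≤ K * (t₁ - t₀) := by
    simpa only [Real.dist_eq, abs_of_nonneg (sub_nonneg.mpr ht₁)] using
      hx.dist_le_mul t₁ ht₁ t₀ self_mem_Ici
  have hmono : StrictMono fun t : ℝ ↦ K * (t - t₀) := fun s t hst ↦ by
    dsimp only
    gcongr
  have hmeet : K * (t₀ + ξ - t₀) ≤ θ (t₀ + ξ) := by rwa [add_sub_cancel_left]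
  exact le_sub_iff_add_le'.mpr <| le_of_strictMonoOn_of_antitoneOn (hmono.strictMonoOn _) hθ
    (le_add_of_nonneg_right hξ) ht₁ hmeet (htrig.trans hdrift)

/-- Event-time lower bound: suppose `e(t₀) = 0`, `e` is `B`-Lipschitz on `[t₀, ∞)`,
and `t₁ > t₀` is such that `‖e(t₁)‖ ≥ A·exp(−κ·t₁)`. Then `t₁ − t₀ ≥ ξ`, where `ξ`
is the (unique) positive solution of `B·ξ = A·exp(−κ·(t₀ + ξ))`. -/
theorem stmt_13 (n : ℕ) (B A κ t₀ t₁ ξ : ℝ) (hB : 0 < B) (hA : 0 < A) (hκ : 0 < κ)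
    (ht₀ : 0 ≤ t₀) (e : ℝ → EuclideanSpace ℝ (Fin n)) (he0 : e t₀ = 0)
    (hlip : ∀ t s : ℝ, t₀ ≤ t → t₀ ≤ s → ‖e t - e s‖ ≤ B * |t - s|)
    (ht₁ : t₀ < t₁) (htrig : A * Real.exp (-(κ * t₁)) ≤ ‖e t₁‖)
    (hξpos : 0 < ξ) (hξeq : B * ξ = A * Real.exp (-(κ * (t₀ + ξ)))) :
    ξ ≤ t₁ - t₀ := by
  lift B to ℝ≥0 using hB.le
  have he : LipschitzOnWith B e (Ici t₀) := .of_dist_le_mul fun t ht s hs ↦ by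
    simpa only [dist_eq_norm_sub, Real.norm_eq_abs] using hlip t s ht hs
  exact stmt_13_general hB he ((antitone_mul_exp_neg_mul hA.le hκ.le).antitoneOn _) ht₁.le
    (by rwa [he0, dist_zero_right]) hξpos.le hξeq.le
end

section
/- Let Q and S be n×n real symmetric positive definite matrices and let μ > 0 satisfy μ²·λ_min(Q) > λ_max(S). Then the 2n×2n block matrix [[½·Q, (1/(2μ))·S], [(1/(2μ))·S, ½·S]] is positive definite. -/
/-!
The lower right block is positive definite, so the block matrix is positive definite iff its Schur
complement `½Q - ((2μ)⁻¹S)(½S)⁻¹((2μ)⁻¹S) = (2μ²)⁻¹(μ²Q - S)` is. In the Loewner order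
`λ_min(Q)I ≤ Q` and `S ≤ λ_max(S)I`, hence `0 < (μ²λ_min(Q) - λ_max(S))I ≤ μ²Q - S`.
-/

section

open Matrix
open scoped ComplexOrder MatrixOrder

variable {m n 𝕜 : Type*} [RCLike 𝕜]

theorem algebraMap_iInf_eigenvalues_le [Fintype n] [DecidableEq n] {A : Matrix n n 𝕜}
    (hA : A.IsHermitian) : algebraMap ℝ _ (⨅ i, hA.eigenvalues i) ≤ A := by
  refine algebraMap_le_of_le_spectrum ?_ hA.isSelfAdjoint
  rw [hA.spectrum_real_eq_range_eigenvalues, Set.forall_mem_range]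
  exact ciInf_le (Set.finite_range hA.eigenvalues).bddBelow

theorem le_algebraMap_iSup_eigenvalues [Fintype n] [DecidableEq n] {A : Matrix n n 𝕜}
    (hA : A.IsHermitian) : A ≤ algebraMap ℝ _ (⨆ i, hA.eigenvalues i) := by
  refine le_algebraMap_of_spectrum_le ?_ hA.isSelfAdjoint
  rw [hA.spectrum_real_eq_range_eigenvalues, Set.forall_mem_range]
  exact le_ciSup (Set.finite_range hA.eigenvalues).bddAbove

theorem posDef_smul_sub_of_iSup_eigenvalues_lt [Fintype n] [DecidableEq n] {A B : Matrix n n 𝕜}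
    (hA : A.IsHermitian) (hB : B.IsHermitian) {c : ℝ} (hc : 0 ≤ c)
    (h : (⨆ i, hB.eigenvalues i) < c * ⨅ i, hA.eigenvalues i) : (c • A - B).PosDef := by
  set a := ⨅ i, hA.eigenvalues i
  set b := ⨆ i, hB.eigenvalues i
  have hgap : (algebraMap ℝ (Matrix n n 𝕜) (c * a - b)).PosDef := by
    rw [Algebra.algebraMap_eq_smul_one]
    exact PosDef.one.smul (sub_pos.2 h)
  have hle : algebraMap ℝ _ (c * a - b) ≤ c • A - B := by
    rw [map_sub, map_mul, ← Algebra.smul_def]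
    exact sub_le_sub (smul_le_smul_of_nonneg_left (algebraMap_iInf_eigenvalues_le hA) hc)
      (le_algebraMap_iSup_eigenvalues hB)
  simpa only [add_sub_cancel] using hgap.add_posSemidef hle

theorem posDef_fromBlocks₂₂_iff [Finite m] [Fintype n] [DecidableEq n] (A : Matrix m m 𝕜)
    (B : Matrix m n 𝕜) {D : Matrix n n 𝕜} (hD : D.PosDef) :
    (fromBlocks A B Bᴴ D).PosDef ↔ (A - B * D⁻¹ * Bᴴ).PosDef := by
  classical
  have := Fintype.ofFinite m
  let := hD.isUnit.invertible
  have hpsd := hD.fromBlocks₂₂ A B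
  have hunit : IsUnit (fromBlocks A B Bᴴ D) ↔ IsUnit (A - B * D⁻¹ * Bᴴ) := by
    rw [isUnit_fromBlocks_iff_of_invertible₂₂, invOf_eq_nonsing_inv]
  constructor
  · intro h
    exact (hpsd.1 h.posSemidef).posDef_iff_isUnit.2 (hunit.1 h.isUnit)
  · intro h
    exact (hpsd.2 h.posSemidef).posDef_iff_isUnit.2 (hunit.2 h.isUnit)

theorem posDef_fromBlocks_smul_iff [Finite n] (A : Matrix n n 𝕜) {S : Matrix n n 𝕜}
    (hS : S.PosDef) (b : ℝ) {d : ℝ} (hd : 0 < d) :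
    (fromBlocks A (b • S) (b • S) (d • S)).PosDef ↔ (A - (b ^ 2 / d) • S).PosDef := by
  classical
  have := Fintype.ofFinite n
  have hherm : (b • S)ᴴ = b • S := by rw [conjTranspose_smul, star_trivial, hS.1.eq]
  have hinv : (d • S)⁻¹ = d⁻¹ • S⁻¹ := by
    refine inv_eq_left_inv ?_
    rw [smul_mul_smul_comm, inv_mul_cancel₀ hd.ne', one_smul,
      nonsing_inv_mul _ hS.det_pos.ne'.isUnit]
  have hschur : (b • S) * (d • S)⁻¹ * (b • S)ᴴ = (b ^ 2 / d) • S := by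
    rw [hherm, hinv, smul_mul_smul_comm, smul_mul_smul_comm,
      mul_nonsing_inv _ hS.det_pos.ne'.isUnit, one_mul]
    congr 1
    ring
  have hiff := posDef_fromBlocks₂₂_iff A (b • S) (hS.smul hd)
  rwa [hschur, hherm] at hiff

theorem stmt_14_general [Fintype n] [DecidableEq n] {Q S : Matrix n n 𝕜} (hQ : Q.IsHermitian)
    (hS : S.PosDef) {μ : ℝ} (hμ : μ ≠ 0)
    (h : (⨆ i, hS.1.eigenvalues i) < μ ^ 2 * ⨅ i, hQ.eigenvalues i) :
    (fromBlocks ((1 / 2 : ℝ) • Q) ((1 / (2 * μ)) • S)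
      ((1 / (2 * μ)) • S) ((1 / 2 : ℝ) • S)).PosDef := by
  have hcompl : (1 / 2 : ℝ) • Q - ((1 / (2 * μ)) ^ 2 / (1 / 2)) • S =
      (1 / (2 * μ ^ 2)) • (μ ^ 2 • Q - S) := by
    rw [smul_sub, smul_smul]
    congr 2 <;> field_simp
  rw [posDef_fromBlocks_smul_iff _ hS _ one_half_pos, hcompl]
  exact (posDef_smul_sub_of_iSup_eigenvalues_lt hQ hS.1 (sq_nonneg μ) h).smul (by positivity)

end

/-- If `Q, S` are symmetric positive definite `n×n` real matrices and `μ > 0`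
satisfies `μ²·λ_min(Q) > λ_max(S)`, then the `2n×2n` block matrix
`[[½Q, (1/(2μ))S], [(1/(2μ))S, ½S]]` is positive definite. -/
theorem stmt_14 (n : ℕ) (Q S : Matrix (Fin n) (Fin n) ℝ)
    (hQ : Q.PosDef) (hS : S.PosDef) (μ : ℝ) (hμ : 0 < μ)
    (h : (⨆ i, hS.1.eigenvalues i) < μ ^ 2 * ⨅ i, hQ.1.eigenvalues i) :
    (Matrix.fromBlocks ((1 / 2 : ℝ) • Q) ((1 / (2 * μ)) • S)
      ((1 / (2 * μ)) • S) ((1 / 2 : ℝ) • S)).PosDef :=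
  stmt_14_general hQ.1 hS hμ.ne' h
end

section
/- Let A be an n×n real matrix all of whose complex eigenvalues have strictly positive real part, let α > 0, let q₀ ∈ ℝⁿ, and let s : [0, ∞) → ℝⁿ be continuous with s(t) → 0 as t → ∞. If q : [0, ∞) → ℝⁿ is differentiable and satisfies q′(t) = −α·A·(q(t) − q₀) + s(t) for all t ≥ 0, then q(t) → q₀ and q′(t) → 0 as t → ∞. -/
open Matrix

/-!
Over `ℂ`, call a polynomial `p` *decay-detecting* for `M` if every solution of `x' = -M x + s` with
`s → 0` tends to `0` as soon as `p(M) x` does. Since `r(M) x` solves the same equation with input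
`r(M) s`, such polynomials are closed under products. A factor `X - a` with `0 < Re a` is one of
them: `x' = -a x + (s - (M - a) x)` is then a scalar equation with vanishing input. So every
polynomial with all its roots in the right half-plane is decay-detecting, and if it annihilates `M`,
then all solutions decay. A real space is embedded isometrically into the complex-valued functionals
on its dual, on which its operators act complex-linearly. For a matrix the annihilating polynomial
is the characteristic polynomial, by Cayley–Hamilton.
-/

open Filter Topology Polynomial Set

section ForcedSolution

variable {E F : Type*} [NormedAddCommGroup E] [NormedSpace ℝ E]
  [NormedAddCommGroup F] [NormedSpace ℝ F]

/-- `x` solves the autonomous equation with forcing `x' = -f(x) + s` on `[0, ∞)`; the derivative at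
`0` is one-sided. -/
def IsForcedSolution (f : E → E) (x s : ℝ → E) : Prop :=
  ∀ t ∈ Ici (0 : ℝ), HasDerivWithinAt x (-f (x t) + s t) (Ici 0) t

theorem IsForcedSolution.map {f : E → E} {g : F → F} {x s : ℝ → E} (h : IsForcedSolution f x s)
    (T : E →L[ℝ] F) (hT : Function.Semiconj T f g) :
    IsForcedSolution g (fun t => T (x t)) (fun t => T (s t)) := fun t ht =>
  (T.hasFDerivAt.comp_hasDerivWithinAt t (h t ht)).congr_deriv <| by
    rw [map_add, map_neg, hT.eq]

end ForcedSolution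

theorem tendsto_gronwallBound_atTop_of_neg (δ : ℝ) {K : ℝ} (hK : K < 0) (ε : ℝ) :
    Tendsto (gronwallBound δ K ε) atTop (𝓝 (-(ε / K))) := by
  have hexp : Tendsto (fun t => Real.exp (K * t)) atTop (𝓝 0) :=
    Real.tendsto_exp_atBot.comp (tendsto_id.const_mul_atTop_of_neg hK)
  rw [gronwallBound_of_K_ne_0 hK.ne]
  simpa using (hexp.const_mul δ).add ((hexp.sub_const 1).const_mul (ε / K))

section Complex

variable {E : Type*} [NormedAddCommGroup E] [NormedSpace ℂ E]

theorem hasDerivAt_cexp_mul_sub (a : ℂ) (t₀ t : ℝ) :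
    HasDerivAt (fun r : ℝ => Complex.exp (a * ↑(r - t₀))) (Complex.exp (a * ↑(t - t₀)) * a) t := by
  simpa using ((((hasDerivAt_id t).sub_const t₀).ofReal_comp).const_mul a).cexp

theorem norm_cexp_mul_ofReal (a : ℂ) (t : ℝ) :
    ‖Complex.exp (a * t)‖ = Real.exp (a.re * t) := by
  rw [Complex.norm_exp, Complex.re_mul_ofReal]

/-- The integrating factor `e^{a(t - t₀)}` turns the equation into `y' = e^{a(t - t₀)} s`. -/
theorem IsForcedSolution.norm_le_gronwallBound {a : ℂ} {x s : ℝ → E}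
    (hx : IsForcedSolution (a • ·) x s) {ε t₀ t : ℝ} (ht₀ : 0 ≤ t₀) (ht : t₀ ≤ t)
    (hs : ∀ r ∈ Ico t₀ t, ‖s r‖ ≤ ε) :
    ‖x t‖ ≤ gronwallBound ‖x t₀‖ (-a.re) ε (t - t₀) := by
  let e : ℝ → ℂ := fun r => Complex.exp (a * ↑(r - t₀))
  let y : ℝ → E := fun r => e r • x r
  let B : ℝ → ℝ := fun r =>
    Real.exp (a.re * (r - t₀)) * gronwallBound ‖x t₀‖ (-a.re) ε (r - t₀)
  have hy : ∀ r ∈ Ici (0 : ℝ), HasDerivWithinAt y (e r • s r) (Ici 0) r := fun r hr =>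
    ((hasDerivAt_cexp_mul_sub a t₀ r).hasDerivWithinAt.smul (hx r hr)).congr_deriv <| by
      simp only [e]; module
  have hB : ∀ r, HasDerivAt B (Real.exp (a.re * (r - t₀)) * ε) r := fun r =>
    ((((hasDerivAt_id r).sub_const t₀).const_mul a.re).exp.mul
      (hasDerivAt_gronwallBound_shift ‖x t₀‖ (-a.re) ε r t₀)).congr_deriv <| by
        simp only [id]; ring
  have hyB : ‖y t‖ ≤ B t :=
    image_norm_le_of_norm_deriv_right_le_deriv_boundary
      (fun r hr => (hy r (ht₀.trans hr.1)).continuousWithinAt.mono fun z hz => ht₀.trans hz.1)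
      (fun r hr => (hy r (ht₀.trans hr.1)).mono (Ici_subset_Ici.2 (ht₀.trans hr.1)))
      (by simp [y, e, B, gronwallBound_x0]) hB
      (fun r hr => by
        rw [norm_smul, norm_cexp_mul_ofReal]
        exact mul_le_mul_of_nonneg_left (hs r hr) (Real.exp_pos _).le)
      (right_mem_Icc.2 ht)
  rw [norm_smul, norm_cexp_mul_ofReal] at hyB
  exact le_of_mul_le_mul_left hyB (Real.exp_pos _)

theorem IsForcedSolution.tendsto_zero_of_smul {a : ℂ} (ha : 0 < a.re) {x s : ℝ → E}
    (hx : IsForcedSolution (a • ·) x s) (hs : Tendsto s atTop (𝓝 0)) :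
    Tendsto x atTop (𝓝 0) := by
  rw [NormedAddGroup.tendsto_nhds_zero] at hs ⊢
  intro δ hδ
  obtain ⟨T, hT⟩ := eventually_atTop.1 (hs (a.re * (δ / 2)) (by positivity))
  set t₀ := max T 0
  have hlim : Tendsto (fun t => gronwallBound ‖x t₀‖ (-a.re) (a.re * (δ / 2)) (t - t₀)) atTop
      (𝓝 (δ / 2)) := by
    have h := tendsto_gronwallBound_atTop_of_neg ‖x t₀‖ (neg_lt_zero.2 ha) (a.re * (δ / 2))
    rw [div_neg, neg_neg, mul_div_cancel_left₀ _ ha.ne'] at h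
    exact h.comp (tendsto_atTop_add_const_right _ _ tendsto_id)
  filter_upwards [hlim.eventually (gt_mem_nhds (half_lt_self hδ)), eventually_ge_atTop t₀]
    with t hlt ht
  have hbound := hx.norm_le_gronwallBound (le_max_right T 0) ht
    fun r hr => (hT r ((le_max_left T 0).trans hr.1)).le
  exact hbound.trans_lt hlt

/-- The polynomials `p` that are decay-detecting for `M`: a solution of `x' = -M x + s` with
vanishing input `s` tends to `0` as soon as `p(M) x` does. -/
def decayDetecting (M : E →L[ℂ] E) : Submonoid ℂ[X] where
  carrier := {p | ∀ x s : ℝ → E, IsForcedSolution M x s → Tendsto s atTop (𝓝 0) →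
    Tendsto (fun t => aeval M p (x t)) atTop (𝓝 0) → Tendsto x atTop (𝓝 0)}
  one_mem' x s _ _ h := by simpa using h
  mul_mem' {p r} hp hr x s hx hs h := by
    have hcomm : Function.Commute (aeval M r) M := fun v => by
      simpa using DFunLike.congr_fun ((Commute.all r X).map (aeval M)).eq v
    have hrs : Tendsto (fun t => aeval M r (s t)) atTop (𝓝 0) := by
      simpa [Function.comp_def] using ((aeval M r).continuous.tendsto 0).comp hs
    refine hr x s hx hs (hp _ _ (hx.map ((aeval M r).restrictScalars ℝ) hcomm) hrs ?_)
    simpa using h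

theorem C_mem_decayDetecting (M : E →L[ℂ] E) {a : ℂ} (ha : a ≠ 0) : C a ∈ decayDetecting M := by
  intro x s _ _ h
  simpa [ha] using h.const_smul a⁻¹

theorem X_sub_C_mem_decayDetecting (M : E →L[ℂ] E) {a : ℂ} (ha : 0 < a.re) :
    X - C a ∈ decayDetecting M := by
  intro x s hx hs h
  have hx' : IsForcedSolution (a • ·) x (fun t => s t - aeval M (X - C a) (x t)) := fun t ht =>
    (hx t ht).congr_deriv <| by
      simp only [map_sub, aeval_X, aeval_C, _root_.sub_apply,
        ContinuousLinearMap.algebraMap_apply]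
      module
  exact hx'.tendsto_zero_of_smul ha (by simpa using hs.sub h)

theorem mem_decayDetecting_of_forall_isRoot (M : E →L[ℂ] E) {p : ℂ[X]}
    (hp : ∀ z, p.IsRoot z → 0 < z.re) : p ∈ decayDetecting M := by
  have hp₀ : p ≠ 0 := by
    rintro rfl
    simpa using hp 0
  rw [(IsAlgClosed.splits p).eq_prod_roots]
  refine mul_mem (C_mem_decayDetecting M (leadingCoeff_ne_zero.2 hp₀))
    (Submonoid.multiset_prod_mem _ _ fun r hr => ?_)
  obtain ⟨a, ha, rfl⟩ := Multiset.mem_map.1 hr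
  exact X_sub_C_mem_decayDetecting M (hp a (isRoot_of_mem_roots ha))

end Complex

section Real

variable {E : Type*} [NormedAddCommGroup E] [NormedSpace ℝ E]

/-- The complex-valued functionals on the dual of `E`: a complex normed space into which `E` embeds
isometrically, playing the role of a complexification of `E`. -/
def ComplexBidual (E : Type*) [NormedAddCommGroup E] [NormedSpace ℝ E] : Type _ :=
  StrongDual ℝ E →L[ℝ] ℂ

namespace ComplexBidual

noncomputable instance : NormedAddCommGroup (ComplexBidual E) :=
  inferInstanceAs (NormedAddCommGroup (StrongDual ℝ E →L[ℝ] ℂ))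

noncomputable instance : NormedSpace ℂ (ComplexBidual E) :=
  inferInstanceAs (NormedSpace ℂ (StrongDual ℝ E →L[ℝ] ℂ))

/-- The isometric embedding of `E` sending `v` to evaluation at `v`. -/
noncomputable def inclusion : E →ₗᵢ[ℝ] ComplexBidual E where
  toFun v := Complex.ofRealCLM.comp (NormedSpace.inclusionInDoubleDual ℝ E v)
  map_add' u v := by rw [map_add, ContinuousLinearMap.comp_add]; rfl
  map_smul' r v := by rw [map_smul, ContinuousLinearMap.comp_smul]; rfl
  norm_map' v := (Complex.ofRealLI.norm_toContinuousLinearMap_comp).trans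
    ((NormedSpace.inclusionInDoubleDualLi ℝ).norm_map v)

/-- The complex-linear extension of an operator on `E`, namely precomposition with its transpose. -/
noncomputable def extend (L : E →L[ℝ] E) : ComplexBidual E →L[ℂ] ComplexBidual E :=
  LinearMap.mkContinuous
    { toFun := fun T : StrongDual ℝ E →L[ℝ] ℂ => T.comp (ContinuousLinearMap.precomp ℝ L)
      map_add' := fun _ _ => rfl
      map_smul' := fun _ _ => rfl }
    ‖ContinuousLinearMap.precomp ℝ L‖
    fun _ => (ContinuousLinearMap.opNorm_comp_le _ _).trans_eq (mul_comm _ _)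

theorem extend_inclusion (L : E →L[ℝ] E) (v : E) :
    extend L (inclusion v) = inclusion (L v) := rfl

end ComplexBidual

theorem aeval_apply_of_semiconj {F : Type*} [NormedAddCommGroup F] [NormedSpace ℂ F]
    {J : E →L[ℝ] F} {L : E →L[ℝ] E} {M : F →L[ℂ] F} (h : Function.Semiconj J L M) (p : ℝ[X])
    (v : E) : aeval M p (J v) = J (aeval L p v) := by
  induction p using Polynomial.induction_on' with
  | add p r hp hr => simp [hp, hr]
  | monomial n a => simp [aeval_monomial, (h.iterate_right n).eq]

theorem IsForcedSolution.tendsto_zero_of_aeval_eq_zero {L : E →L[ℝ] E} {p : ℝ[X]}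
    (hp : ∀ z : ℂ, (p.map (algebraMap ℝ ℂ)).IsRoot z → 0 < z.re) (hL : aeval L p = 0)
    {x s : ℝ → E} (hx : IsForcedSolution L x s) (hs : Tendsto s atTop (𝓝 0)) :
    Tendsto x atTop (𝓝 0) := by
  let J : E →L[ℝ] ComplexBidual E := ComplexBidual.inclusion.toContinuousLinearMap
  let M : ComplexBidual E →L[ℂ] ComplexBidual E := ComplexBidual.extend L
  have hJ : Function.Semiconj J L M := fun v => (ComplexBidual.extend_inclusion L v).symm
  have hs' : Tendsto (fun t => J (s t)) atTop (𝓝 0) := by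
    simpa [Function.comp_def] using (J.continuous.tendsto 0).comp hs
  have hlim : Tendsto (fun t => J (x t)) atTop (𝓝 0) :=
    mem_decayDetecting_of_forall_isRoot M hp _ _ (hx.map J hJ) hs' <| by
      simp [aeval_apply_of_semiconj hJ, hL]
  rw [tendsto_zero_iff_norm_tendsto_zero] at hlim ⊢
  simpa [J] using hlim

theorem stmt_15_general {L : E →L[ℝ] E} {p : ℝ[X]}
    (hp : ∀ z : ℂ, (p.map (algebraMap ℝ ℂ)).IsRoot z → 0 < z.re) (hL : aeval L p = 0)
    {α : ℝ} (hα : 0 < α) {q₀ : E} {s q : ℝ → E} (hs : Tendsto s atTop (𝓝 0))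
    (hq : ∀ t ∈ Ici (0 : ℝ), HasDerivWithinAt q (-(α • L (q t - q₀)) + s t) (Ici 0) t) :
    Tendsto q atTop (𝓝 q₀) ∧ Tendsto (fun t => -(α • L (q t - q₀)) + s t) atTop (𝓝 0) := by
  have hαp : ∀ z : ℂ, ((p.comp (C α⁻¹ * X)).map (algebraMap ℝ ℂ)).IsRoot z → 0 < z.re := by
    intro z hz
    have hre : 0 < ((α⁻¹ : ℝ) * z : ℂ).re := hp _ (by simpa [map_comp] using hz)
    rw [Complex.re_ofReal_mul] at hre
    exact pos_of_mul_pos_right hre (inv_nonneg.2 hα.le)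
  have hαL : aeval (α • L) (p.comp (C α⁻¹ * X)) = 0 := by
    simpa [aeval_comp, ← Algebra.smul_def, smul_smul, hα.ne'] using hL
  have hx : IsForcedSolution (α • L) (fun t => q t - q₀) s := fun t ht => (hq t ht).sub_const q₀
  have hlim := hx.tendsto_zero_of_aeval_eq_zero hαp hαL hs
  refine ⟨tendsto_sub_nhds_zero_iff.1 hlim, ?_⟩
  simpa using (((α • L).continuous.tendsto 0).comp hlim).neg.add hs

end Real

section Matrix

variable {ι 𝕜 : Type*} [Fintype ι] [DecidableEq ι] [NontriviallyNormedField 𝕜] [CompleteSpace 𝕜]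

/-- The operator `v ↦ A v` as a continuous linear map, for the sup norm on `ι → 𝕜`. -/
noncomputable def mulVecCLM (A : Matrix ι ι 𝕜) : (ι → 𝕜) →L[𝕜] (ι → 𝕜) :=
  Module.End.toContinuousLinearMap (ι → 𝕜) (Matrix.toLinAlgEquiv' A)

theorem aeval_mulVecCLM_charpoly (A : Matrix ι ι 𝕜) : aeval (mulVecCLM A) A.charpoly = 0 := by
  rw [mulVecCLM, aeval_algHom_apply, aeval_algHom_apply, A.aeval_self_charpoly, map_zero, map_zero]

end Matrix

/-- Input-to-state stability: if all complex eigenvalues (roots of the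
characteristic polynomial over `ℂ`) of the real matrix `A` have strictly
positive real part, `α > 0`, `s` is continuous with `s(t) → 0`, and `q` solves
`q′(t) = −α·A·(q(t) − q₀) + s(t)` on `[0, ∞)`, then `q(t) → q₀` and `q′(t) → 0`
as `t → ∞`. -/
theorem stmt_15 (n : ℕ) (A : Matrix (Fin n) (Fin n) ℝ)
    (hA : ∀ z : ℂ, (A.charpoly.map (algebraMap ℝ ℂ)).IsRoot z → 0 < z.re)
    (α : ℝ) (hα : 0 < α) (q₀ : Fin n → ℝ) (s q : ℝ → Fin n → ℝ)
    (hs : ContinuousOn s (Set.Ici 0))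
    (hs0 : Filter.Tendsto s Filter.atTop (nhds 0))
    (hq : ∀ t ∈ Set.Ici (0 : ℝ),
      HasDerivWithinAt q (-(α • (A *ᵥ (q t - q₀))) + s t) (Set.Ici 0) t) :
    Filter.Tendsto q Filter.atTop (nhds q₀) ∧
      Filter.Tendsto (fun t => -(α • (A *ᵥ (q t - q₀))) + s t)
        Filter.atTop (nhds 0) :=
  stmt_15_general hA (aeval_mulVecCLM_charpoly A) hα hs0 hq
end
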